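/- arXiv:1701.06187 — 3 statements merged into one kernel-verified Lean document; each statement's English description precedes it below -/
import Mathlib

section
/- (Recursion for the compact form.) Let T_1, …, T_{t−1} be a list of t−1 subsets of 𝒦 with compact form T*_{t−1,1}, …, T*_{t−1,t−1}, and let T_1, …, T_t be the list obtained by appending one more subset T_t, with compact form T*_{t,1}, …, T*_{t,t}. Then T*_{t,1} = T*_{t−1,1} ∪ T_t; T*_{t,i} = T*_{t−1,i} ∪ (T*_{t−1,i−1} ∩ T_t) for every i with 1 < i < t; and T*_{t,t} = T*_{t−1,t−1} ∩ T_t. -/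
/-- The `i`-th set of the compact form of the element rearrangement of the list
`T 0, …, T (t-1)` of subsets of `Fin K`. -/
def compactForm {K t : ℕ} (T : Fin t → Finset (Fin K)) (i : ℕ) : Finset (Fin K) :=
  (Finset.powersetCard i (Finset.univ : Finset (Fin t))).sup fun S => S.inf T

open Finset

section LatticeEsymm

variable {ι κ α : Type*} [Lattice α] [BoundedOrder α]

/-- The `i`-th elementary symmetric lattice polynomial in the family `f` over `s`: the analogue
of the elementary symmetric polynomial with join and meet in place of sum and product. It
extends the compact form from lists of subsets to families in a bounded lattice. -/
def latticeEsymm (s : Finset ι) (f : ι → α) (i : ℕ) : α :=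
  (s.powersetCard i).sup fun S => S.inf f

theorem latticeEsymm_zero (s : Finset ι) (f : ι → α) : latticeEsymm s f 0 = ⊤ := by
  rw [latticeEsymm, powersetCard_zero, sup_singleton, inf_empty]

theorem latticeEsymm_eq_bot_of_card_lt {s : Finset ι} {i : ℕ} (f : ι → α) (h : #s < i) :
    latticeEsymm s f i = ⊥ := by
  rw [latticeEsymm, powersetCard_eq_empty.2 h, sup_empty]

theorem latticeEsymm_map (s : Finset κ) (e : κ ↪ ι) (f : ι → α) (i : ℕ) :
    latticeEsymm (s.map e) f i = latticeEsymm s (f ∘ e) i := by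
  simp only [latticeEsymm, powersetCard_map, sup_map, Function.comp_def, inf_map,
    RelEmbedding.coe_toEmbedding, mapEmbedding_apply]

end LatticeEsymm

section Recursion

variable {ι α : Type*} [DistribLattice α] [BoundedOrder α] {s : Finset ι} {a : ι}

/-- Pascal's rule: an `(i + 1)`-subset of `s ∪ {a}` either avoids `a` or consists of `a` and an
`i`-subset of `s`; by distributivity `f a` factors out of the second join. -/
theorem latticeEsymm_cons_succ (ha : a ∉ s) (f : ι → α) (i : ℕ) :
    latticeEsymm (cons a s ha) f (i + 1) =
      latticeEsymm s f (i + 1) ⊔ latticeEsymm s f i ⊓ f a := by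
  classical
  have sup_insert_inf : (((s.powersetCard i).image (insert a)).sup fun S => S.inf f) =
      latticeEsymm s f i ⊓ f a := by
    simp only [latticeEsymm, sup_image, Function.comp_def, inf_insert, sup_inf_distrib_right,
      inf_comm (f a)]
  rw [latticeEsymm, cons_eq_insert, powersetCard_succ_insert ha, sup_union, sup_insert_inf,
    ← latticeEsymm]

theorem compactForm_recursion_general (ha : a ∉ s) (f : ι → α) :
    latticeEsymm (cons a s ha) f 1 = latticeEsymm s f 1 ⊔ f a ∧
    (∀ i : ℕ, 0 < i →
      latticeEsymm (cons a s ha) f i = latticeEsymm s f i ⊔ latticeEsymm s f (i - 1) ⊓ f a) ∧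
    latticeEsymm (cons a s ha) f (#s + 1) = latticeEsymm s f #s ⊓ f a := by
  refine ⟨?_, fun i hi => ?_, ?_⟩
  · rw [latticeEsymm_cons_succ, latticeEsymm_zero, top_inf_eq]
  · obtain ⟨j, rfl⟩ := Nat.exists_eq_add_one.2 hi
    exact latticeEsymm_cons_succ ha f j
  · rw [latticeEsymm_cons_succ, latticeEsymm_eq_bot_of_card_lt f (Nat.lt_succ_self #s),
      bot_sup_eq]

end Recursion

theorem last_notMem_map_castSuccEmb (n : ℕ) :
    Fin.last n ∉ (univ : Finset (Fin n)).map Fin.castSuccEmb := by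
  simp [Fin.castSucc_ne_last]

theorem compactForm_eq_latticeEsymm_cons {K n : ℕ} (T : Fin (n + 1) → Finset (Fin K)) (i : ℕ) :
    compactForm T i =
      latticeEsymm (cons (Fin.last n) (univ.map Fin.castSuccEmb)
        (last_notMem_map_castSuccEmb n)) T i := by
  rw [← Fin.univ_castSuccEmb]
  rfl

theorem compactForm_castSucc_eq_latticeEsymm {K n : ℕ} (T : Fin (n + 1) → Finset (Fin K))
    (i : ℕ) :
    compactForm (fun j : Fin n => T j.castSucc) i =
      latticeEsymm (univ.map Fin.castSuccEmb) T i :=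
  (latticeEsymm_map univ Fin.castSuccEmb T i).symm

/-- Recursion for the compact form: appending one more subset `T (Fin.last n)` to the list
`T ∘ Fin.castSucc` of `n` subsets, the compact form of the extended list (of `t = n + 1`
sets) is obtained from the compact form of the shorter list by
`T*_{t,1} = T*_{t-1,1} ∪ T_t`, `T*_{t,i} = T*_{t-1,i} ∪ (T*_{t-1,i-1} ∩ T_t)` for
`1 < i < t`, and `T*_{t,t} = T*_{t-1,t-1} ∩ T_t`. -/
theorem compactForm_recursion {K n : ℕ} (hK : 1 ≤ K)
    (T : Fin (n + 1) → Finset (Fin K)) :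
    (compactForm T 1 = compactForm (fun j : Fin n => T j.castSucc) 1 ∪ T (Fin.last n)) ∧
    (∀ i : ℕ, 1 < i → i < n + 1 →
      compactForm T i
        = compactForm (fun j : Fin n => T j.castSucc) i
            ∪ (compactForm (fun j : Fin n => T j.castSucc) (i - 1) ∩ T (Fin.last n))) ∧
    (compactForm T (n + 1)
        = compactForm (fun j : Fin n => T j.castSucc) n ∩ T (Fin.last n)) := by
  obtain ⟨first, middle, last⟩ :=
    compactForm_recursion_general (last_notMem_map_castSuccEmb n) T
  rw [card_map, card_fin] at last
  simp only [compactForm_eq_latticeEsymm_cons, compactForm_castSucc_eq_latticeEsymm]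
  exact ⟨first, fun i hi _ => middle i (Nat.zero_lt_of_lt hi), last⟩
end

section
/- For all subsets T₁, T₂ ⊆ 𝒦, the set function b⁺(T) = I(V_T; Y | V_{T^c}, Q) satisfies the supermodular-type inequality b⁺(T₁) + b⁺(T₂) ≥ b⁺(T₁ ∩ T₂) + b⁺(T₁ ∪ T₂), i.e., I(V_{T₁}; Y | V_{T₁^c}, Q) + I(V_{T₂}; Y | V_{T₂^c}, Q) ≥ I(V_{T₁∩T₂}; Y | V_{(T₁∩T₂)^c}, Q) + I(V_{T₁∪T₂}; Y | V_{(T₁∪T₂)^c}, Q). -/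
open scoped Classical

/-- Probability that the random variable `X` (on the finite sample space `Ω` with
probability mass function `p`) takes the value `a`. -/
noncomputable def prob {Ω : Type} [Fintype Ω] (p : Ω → ℝ) {α : Type} (X : Ω → α)
    (a : α) : ℝ :=
  ∑ ω : Ω, if X ω = a then p ω else 0

/-- Shannon entropy (base 2) of the random variable `X`, with the convention
`0 · log 0 = 0`. -/
noncomputable def ent {Ω : Type} [Fintype Ω] (p : Ω → ℝ) {α : Type} [Fintype α]
    (X : Ω → α) : ℝ :=
  -∑ a : α, prob p X a * Real.logb 2 (prob p X a)

/-- Conditional mutual information `I(X; Y | Z) = H(X,Z) + H(Y,Z) - H(X,Y,Z) - H(Z)`. -/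
noncomputable def condMI {Ω : Type} [Fintype Ω] (p : Ω → ℝ) {α β γ : Type}
    [Fintype α] [Fintype β] [Fintype γ] (X : Ω → α) (Y : Ω → β) (Z : Ω → γ) : ℝ :=
  ent p (fun ω => (X ω, Z ω)) + ent p (fun ω => (Y ω, Z ω))
    - ent p (fun ω => (X ω, Y ω, Z ω)) - ent p Z

/-- The tuple-valued random variable `V_J = (V_j)_{j ∈ J}`. -/
def VJ {Ω : Type} {K : ℕ} {α : Fin K → Type} (V : (i : Fin K) → Ω → α i)
    (J : Finset (Fin K)) : Ω → ((j : J) → α j) :=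
  fun ω j => V j ω

/-- `V_1, …, V_K` are mutually conditionally independent given `Q`:
`P(V_1 = v_1, …, V_K = v_K, Q = q) · P(Q = q)^(K-1) = ∏ i, P(V_i = v_i, Q = q)`. -/
def CondIndep {Ω : Type} [Fintype Ω] {𝒬 : Type} {K : ℕ} {α : Fin K → Type}
    (p : Ω → ℝ) (Q : Ω → 𝒬) (V : (i : Fin K) → Ω → α i) : Prop :=
  ∀ (q : 𝒬) (v : (i : Fin K) → α i),
    prob p (fun ω => ((fun i => V i ω : (i : Fin K) → α i), Q ω)) (v, q)
        * (prob p Q q) ^ (K - 1)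
      = ∏ i : Fin K, prob p (fun ω => (V i ω, Q ω)) (v i, q)

/-!
Expanding everything into entropies, with `A = T₁ᶜ` and `B = T₂ᶜ`, gives the identity
`b⁺(T₁) + b⁺(T₂) - b⁺(T₁ ∩ T₂) - b⁺(T₁ ∪ T₂) =
  I(V_A; V_B | V_{A ∩ B}, Y, Q) - I(V_A; V_B | V_{A ∩ B}, Q)`.
The first term on the right is nonnegative, like every conditional mutual information, and the
second one vanishes because `V_1, …, V_K` are independent given `Q`.
-/

section Entropy

variable {Ω α β γ : Type} [Fintype Ω] {p : Ω → ℝ}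

theorem prob_nonneg (hp : ∀ ω, 0 ≤ p ω) (X : Ω → α) (a : α) : 0 ≤ prob p X a :=
  Finset.sum_nonneg fun ω _ => by split_ifs <;> simp [hp ω]

theorem prob_apply_pos (hp : ∀ ω, 0 ≤ p ω) (X : Ω → α) {ω : Ω} (hω : 0 < p ω) :
    0 < prob p X (X ω) := by
  refine Finset.sum_pos' (fun ω' _ => ?_) ⟨ω, Finset.mem_univ ω, by simpa using hω⟩
  split_ifs <;> simp [hp ω']

theorem prob_apply_congr {X : Ω → α} {Y : Ω → β} (h : ∀ ω ω', X ω = X ω' ↔ Y ω = Y ω') (ω : Ω) :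
    prob p X (X ω) = prob p Y (Y ω) := by
  simp only [prob, h]

theorem sum_mul_comp_eq_sum_prob_mul [Fintype α] (X : Ω → α) (f : α → ℝ) :
    ∑ ω, p ω * f (X ω) = ∑ a, prob p X a * f a := by
  simp only [prob, Finset.sum_mul, ite_mul, zero_mul]
  rw [Finset.sum_comm]
  simp

theorem sum_prob [Fintype α] (X : Ω → α) : ∑ a, prob p X a = ∑ ω, p ω := by
  simpa using (sum_mul_comp_eq_sum_prob_mul (p := p) X fun _ => 1).symm

theorem sum_prob_prodMk_left [Fintype α] (X : Ω → α) (Y : Ω → β) (b : β) :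
    ∑ a, prob p (fun ω => (X ω, Y ω)) (a, b) = prob p Y b := by
  simp only [prob]
  rw [Finset.sum_comm]
  simp [Prod.ext_iff, ite_and]

theorem ent_eq_neg_sum_mul_logb [Fintype α] (X : Ω → α) :
    ent p X = -∑ ω, p ω * Real.logb 2 (prob p X (X ω)) := by
  rw [ent, sum_mul_comp_eq_sum_prob_mul X fun a => Real.logb 2 (prob p X a)]

theorem ent_congr [Fintype α] [Fintype β] {X : Ω → α} {Y : Ω → β}
    (h : ∀ ω ω', X ω = X ω' ↔ Y ω = Y ω') : ent p X = ent p Y := by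
  simp only [ent_eq_neg_sum_mul_logb, prob_apply_congr h]

/-- The ratio `P(x, y, z) P(z) / (P(x, z) P(y, z))` at the values of `X`, `Y`, `Z` in the sample
point `ω`. Its logarithm is the conditional information density, whose mean is `I(X; Y | Z)`.
Where `P(x, y, z) = 0` it has a junk value, which carries no mass. -/
noncomputable def condInfoRatio (p : Ω → ℝ) (X : Ω → α) (Y : Ω → β) (Z : Ω → γ) (ω : Ω) : ℝ :=
  prob p (fun ω => (X ω, Y ω, Z ω)) (X ω, Y ω, Z ω) * prob p Z (Z ω) /
    (prob p (fun ω => (X ω, Z ω)) (X ω, Z ω) * prob p (fun ω => (Y ω, Z ω)) (Y ω, Z ω))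

theorem condInfoRatio_pos (hp : ∀ ω, 0 ≤ p ω) (X : Ω → α) (Y : Ω → β) (Z : Ω → γ) {ω : Ω}
    (hω : 0 < p ω) : 0 < condInfoRatio p X Y Z ω :=
  div_pos
    (mul_pos (prob_apply_pos hp (fun ω => (X ω, Y ω, Z ω)) hω) (prob_apply_pos hp Z hω))
    (mul_pos (prob_apply_pos hp (fun ω => (X ω, Z ω)) hω)
      (prob_apply_pos hp (fun ω => (Y ω, Z ω)) hω))

theorem sum_prob_mul_prob_div_prob [Fintype α] [Fintype β] [Fintype γ] (X : Ω → α) (Y : Ω → β)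
    (Z : Ω → γ) :
    ∑ x, ∑ y, ∑ z, prob p (fun ω => (X ω, Z ω)) (x, z) * prob p (fun ω => (Y ω, Z ω)) (y, z)
      / prob p Z z = ∑ ω, p ω := by
  calc _ = ∑ z, (∑ x, prob p (fun ω => (X ω, Z ω)) (x, z))
          * (∑ y, prob p (fun ω => (Y ω, Z ω)) (y, z)) / prob p Z z := by
        simp only [Finset.sum_mul_sum, Finset.sum_div]
        rw [Finset.sum_comm (s := (Finset.univ : Finset γ))]
        exact Finset.sum_congr rfl fun _ _ => Finset.sum_comm
    _ = ∑ z, prob p Z z := by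
        refine Finset.sum_congr rfl fun z _ => ?_
        rw [sum_prob_prodMk_left, sum_prob_prodMk_left, mul_self_div_self]
    _ = ∑ ω, p ω := sum_prob Z

theorem sum_mul_inv_condInfoRatio_le [Finite α] [Finite β] [Finite γ] (hp : ∀ ω, 0 ≤ p ω)
    (X : Ω → α) (Y : Ω → β) (Z : Ω → γ) :
    ∑ ω, p ω * (condInfoRatio p X Y Z ω)⁻¹ ≤ ∑ ω, p ω := by
  cases nonempty_fintype α
  cases nonempty_fintype β
  cases nonempty_fintype γ
  set P := prob p fun ω => (X ω, Y ω, Z ω)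
  set PX := prob p fun ω => (X ω, Z ω)
  set PY := prob p fun ω => (Y ω, Z ω)
  set PZ := prob p Z
  have cancel_joint : ∀ x y z, P (x, y, z) * (P (x, y, z) * PZ z / (PX (x, z) * PY (y, z)))⁻¹
      ≤ PX (x, z) * PY (y, z) / PZ z := by
    intro x y z
    rcases eq_or_ne (P (x, y, z)) 0 with h | h
    · rw [h, zero_mul]
      exact div_nonneg (mul_nonneg (prob_nonneg hp _ _) (prob_nonneg hp _ _)) (prob_nonneg hp _ _)
    · rw [inv_div, mul_div_assoc', mul_div_mul_left _ _ h]
  calc ∑ ω, p ω * (condInfoRatio p X Y Z ω)⁻¹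
      = ∑ x, ∑ y, ∑ z, P (x, y, z) * (P (x, y, z) * PZ z / (PX (x, z) * PY (y, z)))⁻¹ := by
        refine (sum_mul_comp_eq_sum_prob_mul (fun ω => (X ω, Y ω, Z ω)) fun v =>
          (P v * PZ v.2.2 / (PX (v.1, v.2.2) * PY (v.2.1, v.2.2)))⁻¹).trans ?_
        simp only [Fintype.sum_prod_type, P]
    _ ≤ ∑ x, ∑ y, ∑ z, PX (x, z) * PY (y, z) / PZ z := by
        gcongr
        exact cancel_joint _ _ _
    _ = ∑ ω, p ω := sum_prob_mul_prob_div_prob X Y Z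

variable [Fintype α] [Fintype β] [Fintype γ]

theorem condMI_eq_sum_mul_logb_condInfoRatio (hp : ∀ ω, 0 ≤ p ω) (X : Ω → α) (Y : Ω → β)
    (Z : Ω → γ) : condMI p X Y Z = ∑ ω, p ω * Real.logb 2 (condInfoRatio p X Y Z ω) := by
  have logb_ratio : ∀ ω, p ω * Real.logb 2 (condInfoRatio p X Y Z ω)
      = p ω * Real.logb 2 (prob p (fun ω => (X ω, Y ω, Z ω)) (X ω, Y ω, Z ω))
        + p ω * Real.logb 2 (prob p Z (Z ω))
        - p ω * Real.logb 2 (prob p (fun ω => (X ω, Z ω)) (X ω, Z ω))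
        - p ω * Real.logb 2 (prob p (fun ω => (Y ω, Z ω)) (Y ω, Z ω)) := by
    intro ω
    rcases (hp ω).eq_or_lt with hω | hω
    · simp [← hω]
    · have hXYZ := (prob_apply_pos hp (fun ω => (X ω, Y ω, Z ω)) hω).ne'
      have hXZ := (prob_apply_pos hp (fun ω => (X ω, Z ω)) hω).ne'
      have hYZ := (prob_apply_pos hp (fun ω => (Y ω, Z ω)) hω).ne'
      have hZ := (prob_apply_pos hp Z hω).ne'
      rw [condInfoRatio, Real.logb_div (mul_ne_zero hXYZ hZ) (mul_ne_zero hXZ hYZ),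
        Real.logb_mul hXYZ hZ, Real.logb_mul hXZ hYZ]
      ring
  simp only [logb_ratio, Finset.sum_sub_distrib, Finset.sum_add_distrib, condMI,
    ent_eq_neg_sum_mul_logb]
  ring

theorem condMI_nonneg (hp : ∀ ω, 0 ≤ p ω) (X : Ω → α) (Y : Ω → β) (Z : Ω → γ) :
    0 ≤ condMI p X Y Z := by
  have le_mul_log : ∀ ω, p ω - p ω * (condInfoRatio p X Y Z ω)⁻¹
      ≤ p ω * Real.log (condInfoRatio p X Y Z ω) := by
    intro ω
    rcases (hp ω).eq_or_lt with hω | hω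
    · simp [← hω]
    · rw [← mul_one_sub]
      exact mul_le_mul_of_nonneg_left
        (Real.one_sub_inv_le_log_of_pos (condInfoRatio_pos hp X Y Z hω)) hω.le
  have sum_mul_log_nonneg : 0 ≤ ∑ ω, p ω * Real.log (condInfoRatio p X Y Z ω) :=
    calc 0 ≤ ∑ ω, p ω - ∑ ω, p ω * (condInfoRatio p X Y Z ω)⁻¹ :=
          sub_nonneg.2 (sum_mul_inv_condInfoRatio_le hp X Y Z)
      _ = ∑ ω, (p ω - p ω * (condInfoRatio p X Y Z ω)⁻¹) := (Finset.sum_sub_distrib _ _).symm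
      _ ≤ _ := Finset.sum_le_sum fun ω _ => le_mul_log ω
  simp only [condMI_eq_sum_mul_logb_condInfoRatio hp, Real.logb, mul_div_assoc',
    ← Finset.sum_div]
  exact div_nonneg sum_mul_log_nonneg (Real.log_nonneg one_le_two)

theorem condMI_eq_zero_of_prob_mul_prob_eq (hp : ∀ ω, 0 ≤ p ω) {X : Ω → α} {Y : Ω → β}
    {Z : Ω → γ}
    (h : ∀ ω, 0 < p ω →
      prob p (fun ω => (X ω, Y ω, Z ω)) (X ω, Y ω, Z ω) * prob p Z (Z ω)
        = prob p (fun ω => (X ω, Z ω)) (X ω, Z ω) * prob p (fun ω => (Y ω, Z ω)) (Y ω, Z ω)) :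
    condMI p X Y Z = 0 := by
  rw [condMI_eq_sum_mul_logb_condInfoRatio hp]
  refine Finset.sum_eq_zero fun ω _ => ?_
  rcases (hp ω).eq_or_lt with hω | hω
  · simp [← hω]
  · have hXZ := prob_apply_pos hp (fun ω => (X ω, Z ω)) hω
    have hYZ := prob_apply_pos hp (fun ω => (Y ω, Z ω)) hω
    rw [condInfoRatio, h ω hω, div_self (mul_pos hXZ hYZ).ne', Real.logb_one, mul_zero]

end Entropy

section Tuples

variable {Ω : Type} {K : ℕ} {α : Fin K → Type} {V : (i : Fin K) → Ω → α i}

theorem VJ_eq_VJ_iff {J : Finset (Fin K)} {ω ω' : Ω} :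
    VJ V J ω = VJ V J ω' ↔ ∀ i ∈ J, V i ω = V i ω' := by
  simp [VJ, funext_iff]

theorem prodMk_VJ_eq_iff_of_subset {β : Type} (W : Ω → β) {I J : Finset (Fin K)} (h : J ⊆ I)
    (ω ω' : Ω) :
    (VJ V I ω, VJ V J ω, W ω) = (VJ V I ω', VJ V J ω', W ω')
      ↔ (VJ V I ω, W ω) = (VJ V I ω', W ω') := by
  simp only [Prod.mk.injEq, VJ_eq_VJ_iff]
  grind

theorem prodMk_VJ_inter_eq_iff_union {β : Type} (W : Ω → β) (A B : Finset (Fin K)) (ω ω' : Ω) :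
    (VJ V A ω, VJ V B ω, VJ V (A ∩ B) ω, W ω) = (VJ V A ω', VJ V B ω', VJ V (A ∩ B) ω', W ω')
      ↔ (VJ V (A ∪ B) ω, W ω) = (VJ V (A ∪ B) ω', W ω') := by
  simp only [Prod.mk.injEq, VJ_eq_VJ_iff]
  grind

variable [Fintype Ω] {p : Ω → ℝ}

section CondIndep

variable {𝒬 : Type} {Q : Ω → 𝒬}

theorem prob_VJ_eq_sum_piFinset [∀ i, Fintype (α i)] (J : Finset (Fin K)) (v : ∀ i, α i) (q : 𝒬) :
    prob p (fun ω => (VJ V J ω, Q ω)) (J.restrict v, q)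
      = ∑ u ∈ Fintype.piFinset fun i => if i ∈ J then {v i} else Finset.univ,
          prob p (fun ω => ((fun i => V i ω), Q ω)) (u, q) := by
  simp only [prob]
  rw [Finset.sum_comm]
  refine Finset.sum_congr rfl fun ω _ => ?_
  have mem_piFinset_iff : ((fun i => V i ω) ∈ Fintype.piFinset fun i =>
      if i ∈ J then {v i} else Finset.univ) ↔ VJ V J ω = J.restrict v := by
    simp only [Fintype.mem_piFinset, funext_iff, VJ, Finset.restrict, Subtype.forall]
    refine forall_congr' fun i => ?_
    by_cases hi : i ∈ J <;> simp [hi]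
  simp only [Prod.mk.injEq, ite_and, Finset.sum_ite_eq, mem_piFinset_iff]

theorem CondIndep.prob_VJ_mul_pow [∀ i, Finite (α i)] (hind : CondIndep p Q V)
    (J : Finset (Fin K)) (v : ∀ i, α i) (q : 𝒬) :
    prob p (fun ω => (VJ V J ω, Q ω)) (J.restrict v, q) * prob p Q q ^ (K - 1)
      = (∏ i ∈ J, prob p (fun ω => (V i ω, Q ω)) (v i, q)) * prob p Q q ^ Jᶜ.card := by
  have (i : Fin K) : Fintype (α i) := Fintype.ofFinite (α i)
  calc prob p (fun ω => (VJ V J ω, Q ω)) (J.restrict v, q) * prob p Q q ^ (K - 1)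
      = ∑ u ∈ Fintype.piFinset fun i => if i ∈ J then {v i} else Finset.univ,
          ∏ i, prob p (fun ω => (V i ω, Q ω)) (u i, q) := by
        rw [prob_VJ_eq_sum_piFinset, Finset.sum_mul]
        exact Finset.sum_congr rfl fun u _ => hind q u
    _ = ∏ i, ∑ a ∈ if i ∈ J then {v i} else Finset.univ,
          prob p (fun ω => (V i ω, Q ω)) (a, q) := by
        rw [Finset.prod_univ_sum]
    _ = (∏ i ∈ J, prob p (fun ω => (V i ω, Q ω)) (v i, q)) * ∏ _i ∈ Jᶜ, prob p Q q := by
        rw [← Finset.prod_mul_prod_compl J]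
        congr 1 <;> refine Finset.prod_congr rfl fun _ hi => ?_
        · rw [if_pos hi, Finset.sum_singleton]
        · rw [if_neg (Finset.mem_compl.1 hi), sum_prob_prodMk_left]
    _ = _ := by rw [Finset.prod_const]

theorem CondIndep.prob_VJ_union_mul_prob_VJ_inter [∀ i, Finite (α i)] (hind : CondIndep p Q V)
    (A B : Finset (Fin K)) (v : ∀ i, α i) {q : 𝒬} (hq : prob p Q q ≠ 0) :
    prob p (fun ω => (VJ V (A ∪ B) ω, Q ω)) ((A ∪ B).restrict v, q)
        * prob p (fun ω => (VJ V (A ∩ B) ω, Q ω)) ((A ∩ B).restrict v, q)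
      = prob p (fun ω => (VJ V A ω, Q ω)) (A.restrict v, q)
        * prob p (fun ω => (VJ V B ω, Q ω)) (B.restrict v, q) := by
  let f : Fin K → ℝ := fun i => prob p (fun ω => (V i ω, Q ω)) (v i, q)
  have hpow := pow_ne_zero (K - 1) hq
  have hcard : (A ∪ B)ᶜ.card + (A ∩ B)ᶜ.card = Aᶜ.card + Bᶜ.card := by
    rw [Finset.compl_union, Finset.compl_inter, Finset.card_inter_add_card_union]
  refine mul_right_cancel₀ (mul_ne_zero hpow hpow) ?_
  calc _ = ((∏ i ∈ A ∪ B, f i) * ∏ i ∈ A ∩ B, f i)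
          * prob p Q q ^ ((A ∪ B)ᶜ.card + (A ∩ B)ᶜ.card) := by
        rw [mul_mul_mul_comm, hind.prob_VJ_mul_pow, hind.prob_VJ_mul_pow, pow_add,
          mul_mul_mul_comm]
    _ = ((∏ i ∈ A, f i) * ∏ i ∈ B, f i) * prob p Q q ^ (Aᶜ.card + Bᶜ.card) := by
        rw [Finset.prod_union_inter, hcard]
    _ = _ := by
        rw [pow_add, mul_mul_mul_comm, ← hind.prob_VJ_mul_pow, ← hind.prob_VJ_mul_pow,
          mul_mul_mul_comm]

theorem CondIndep.condMI_VJ_eq_zero [∀ i, Fintype (α i)] [Fintype 𝒬] (hp : ∀ ω, 0 ≤ p ω)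
    (hind : CondIndep p Q V) (A B : Finset (Fin K)) :
    condMI p (VJ V A) (VJ V B) (fun ω => (VJ V (A ∩ B) ω, Q ω)) = 0 := by
  refine condMI_eq_zero_of_prob_mul_prob_eq hp fun ω hω => ?_
  rw [prob_apply_congr (prodMk_VJ_inter_eq_iff_union Q A B),
    prob_apply_congr (prodMk_VJ_eq_iff_of_subset Q Finset.inter_subset_left),
    prob_apply_congr (prodMk_VJ_eq_iff_of_subset Q Finset.inter_subset_right)]
  exact hind.prob_VJ_union_mul_prob_VJ_inter A B (fun i => V i ω) (prob_apply_pos hp Q hω).ne'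

end CondIndep

variable [∀ i, Fintype (α i)] {β 𝒴 : Type} [Fintype β] [Fintype 𝒴]

theorem condMI_VJ_VJ_inter (W : Ω → β) (A B : Finset (Fin K)) :
    condMI p (VJ V A) (VJ V B) (fun ω => (VJ V (A ∩ B) ω, W ω))
      = ent p (fun ω => (VJ V A ω, W ω)) + ent p (fun ω => (VJ V B ω, W ω))
        - ent p (fun ω => (VJ V (A ∪ B) ω, W ω)) - ent p (fun ω => (VJ V (A ∩ B) ω, W ω)) := by
  rw [condMI, ent_congr (prodMk_VJ_inter_eq_iff_union W A B),
    ent_congr (prodMk_VJ_eq_iff_of_subset W Finset.inter_subset_left),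
    ent_congr (prodMk_VJ_eq_iff_of_subset W Finset.inter_subset_right)]

theorem condMI_VJ_compl (W : Ω → β) (Y : Ω → 𝒴) (T : Finset (Fin K)) :
    condMI p (VJ V T) Y (fun ω => (VJ V Tᶜ ω, W ω))
      = ent p (fun ω => (VJ V Finset.univ ω, W ω)) + ent p (fun ω => (VJ V Tᶜ ω, Y ω, W ω))
        - ent p (fun ω => (VJ V Finset.univ ω, Y ω, W ω)) - ent p (fun ω => (VJ V Tᶜ ω, W ω)) := by
  have univ_iff : ∀ ω ω', (VJ V T ω, VJ V Tᶜ ω, W ω) = (VJ V T ω', VJ V Tᶜ ω', W ω')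
      ↔ (VJ V Finset.univ ω, W ω) = (VJ V Finset.univ ω', W ω') := by
    simp only [Prod.mk.injEq, VJ_eq_VJ_iff, Finset.mem_compl, Finset.mem_univ]
    grind
  have univ_prodMk_iff : ∀ ω ω',
      (VJ V T ω, Y ω, VJ V Tᶜ ω, W ω) = (VJ V T ω', Y ω', VJ V Tᶜ ω', W ω')
        ↔ (VJ V Finset.univ ω, Y ω, W ω) = (VJ V Finset.univ ω', Y ω', W ω') := by
    grind
  have swap_iff : ∀ ω ω', (Y ω, VJ V Tᶜ ω, W ω) = (Y ω', VJ V Tᶜ ω', W ω')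
      ↔ (VJ V Tᶜ ω, Y ω, W ω) = (VJ V Tᶜ ω', Y ω', W ω') := by
    simp only [Prod.mk.injEq, and_left_comm, implies_true]
  rw [condMI, ent_congr univ_iff, ent_congr univ_prodMk_iff, ent_congr swap_iff]

theorem condMI_VJ_add_condMI_VJ_sub (W : Ω → β) (Y : Ω → 𝒴) (T₁ T₂ : Finset (Fin K)) :
    condMI p (VJ V T₁) Y (fun ω => (VJ V T₁ᶜ ω, W ω))
        + condMI p (VJ V T₂) Y (fun ω => (VJ V T₂ᶜ ω, W ω))
        - condMI p (VJ V (T₁ ∩ T₂)) Y (fun ω => (VJ V (T₁ ∩ T₂)ᶜ ω, W ω))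
        - condMI p (VJ V (T₁ ∪ T₂)) Y (fun ω => (VJ V (T₁ ∪ T₂)ᶜ ω, W ω))
      = condMI p (VJ V T₁ᶜ) (VJ V T₂ᶜ) (fun ω => (VJ V (T₁ᶜ ∩ T₂ᶜ) ω, Y ω, W ω))
        - condMI p (VJ V T₁ᶜ) (VJ V T₂ᶜ) (fun ω => (VJ V (T₁ᶜ ∩ T₂ᶜ) ω, W ω)) := by
  rw [condMI_VJ_VJ_inter W, condMI_VJ_VJ_inter fun ω => (Y ω, W ω)]
  simp only [condMI_VJ_compl]
  rw [Finset.compl_inter, Finset.compl_union]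
  ring

end Tuples

/-- The set function `b⁺(T) = I(V_T; Y | V_{T^c}, Q)` is supermodular:
`b⁺(T₁) + b⁺(T₂) ≥ b⁺(T₁ ∩ T₂) + b⁺(T₁ ∪ T₂)`. -/
theorem bplus_supermodular {Ω 𝒬 𝒴 𝒵 : Type} [Fintype Ω] [Fintype 𝒬] [Fintype 𝒴]
    [Fintype 𝒵] {K : ℕ} {α : Fin K → Type} [∀ i, Fintype (α i)]
    (p : Ω → ℝ) (hp : ∀ ω, 0 ≤ p ω) (hp1 : ∑ ω : Ω, p ω = 1)
    (Q : Ω → 𝒬) (Y : Ω → 𝒴) (Z : Ω → 𝒵) (V : (i : Fin K) → Ω → α i)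
    (hind : CondIndep p Q V) (T₁ T₂ : Finset (Fin K)) :
    condMI p (VJ V (T₁ ∩ T₂)) Y (fun ω => (VJ V (T₁ ∩ T₂)ᶜ ω, Q ω))
        + condMI p (VJ V (T₁ ∪ T₂)) Y (fun ω => (VJ V (T₁ ∪ T₂)ᶜ ω, Q ω))
      ≤ condMI p (VJ V T₁) Y (fun ω => (VJ V T₁ᶜ ω, Q ω))
        + condMI p (VJ V T₂) Y (fun ω => (VJ V T₂ᶜ ω, Q ω)) := by
  have gap_eq := condMI_VJ_add_condMI_VJ_sub (p := p) (V := V) Q Y T₁ T₂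
  have nonneg := condMI_nonneg hp (VJ V T₁ᶜ) (VJ V T₂ᶜ)
    (fun ω => (VJ V (T₁ᶜ ∩ T₂ᶜ) ω, Y ω, Q ω))
  have eq_zero := hind.condMI_VJ_eq_zero hp T₁ᶜ T₂ᶜ
  linarith
end

section
/- (Exactness of the Fourier–Motzkin elimination.) Fix K ≥ 1 and 𝒦 = {1, …, K}. Let f and g be real-valued functions on the subsets of 𝒦 with f(∅) = g(∅) = 0 and g(J) ≥ 0 for all J, and suppose that for every finite list T_1, …, T_t of subsets of 𝒦 with compact form T*_{t,1}, …, T*_{t,t} one has ∑_{i=1}^t f(T_i) ≥ ∑_{i=1}^t f(T*_{t,i}) and ∑_{i=1}^t g(T_i) ≤ ∑_{i=1}^t g(T*_{t,i}). Then for every x ∈ ℝ^K the following are equivalent: (i) there exists y ∈ ℝ^K such that ∑_{j∈J} (x_j + y_j) ≤ f(J) and ∑_{j∈J} y_j ≥ g(J) for every nonempty J ⊆ 𝒦; (ii) ∑_{j∈J} x_j ≤ f(J) − g(J) for every nonempty J ⊆ 𝒦. -/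
/-!
The compact form of a two-element list `A, B` is `A ∪ B, A ∩ B`, so the hypotheses on `f` and `g`
contain submodularity of `f` and supermodularity of `g`. Condition (i) asks for a modular function
between the supermodular `g` and the submodular `J ↦ f J - ∑ j ∈ J, x j`, and the modular sandwich
theorem provides one as soon as `g` lies below that function, which is condition (ii).

The sandwich theorem eliminates one coordinate `e` at a time. Uncrossing shows that every lower
bound `p (insert e J) - b (J.erase e)` on the value at `e` is at most every upper bound
`b (insert e L) - p (L.erase e)`, and fixing that value in between leaves constraints on the
remaining coordinates that are again given by a supermodular function below a submodular one.
-/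

open Finset

section Modularity

variable {α G : Type*} [Lattice α]

/-- Supermodularity of a function on a lattice. It is used for set functions, which are functions on
the lattice `Finset α` under union and intersection. -/
def Supermodular [Add G] [LE G] (f : α → G) : Prop :=
  ∀ a b, f a + f b ≤ f (a ⊔ b) + f (a ⊓ b)

/-- Submodularity of a function on a lattice, the notion dual to `Supermodular`. -/
def Submodular [Add G] [LE G] (f : α → G) : Prop :=
  ∀ a b, f (a ⊔ b) + f (a ⊓ b) ≤ f a + f b

theorem supermodular_neg [AddCommGroup G] [PartialOrder G] [IsOrderedAddMonoid G] {f : α → G} :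
    Supermodular (-f) ↔ Submodular f := by
  refine forall₂_congr fun a b => ?_
  simp only [Pi.neg_apply, ← neg_add, neg_le_neg_iff]

end Modularity

section Uncrossing

variable {α G : Type*} [DecidableEq α]

theorem erase_union_insert (A B : Finset α) (e : α) :
    A.erase e ∪ insert e B = insert e (A ∪ B) := by
  grind

theorem erase_inter_insert (A B : Finset α) (e : α) :
    A.erase e ∩ insert e B = (A ∩ B).erase e := by
  grind

theorem Supermodular.erase_add_insert_le [Add G] [LE G] {p : Finset α → G} (hp : Supermodular p)
    (A B : Finset α) (e : α) :
    p (A.erase e) + p (insert e B) ≤ p (insert e (A ∪ B)) + p ((A ∩ B).erase e) := by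
  simpa only [sup_eq_union, inf_eq_inter, erase_union_insert, erase_inter_insert] using
    hp (A.erase e) (insert e B)

theorem Submodular.le_erase_add_insert [Add G] [LE G] {b : Finset α → G} (hb : Submodular b)
    (A B : Finset α) (e : α) :
    b (insert e (A ∪ B)) + b ((A ∩ B).erase e) ≤ b (A.erase e) + b (insert e B) := by
  simpa only [sup_eq_union, inf_eq_inter, erase_union_insert, erase_inter_insert] using
    hb (A.erase e) (insert e B)

variable [AddCommGroup G] [PartialOrder G] [IsOrderedAddMonoid G]

theorem Submodular.sub_sum {f : Finset α → G} (hf : Submodular f) (x : α → G) :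
    Submodular fun J => f J - ∑ j ∈ J, x j := by
  intro A B
  simp only [sup_eq_union, inf_eq_inter, sub_add_sub_comm, sum_union_inter]
  exact sub_le_sub_right (hf A B) _

theorem insert_sub_erase_le_insert_sub_erase {p b : Finset α → G} (hp : Supermodular p)
    (hb : Submodular b) (hpb : p ≤ b) (e : α) (J L : Finset α) :
    p (insert e J) - b (J.erase e) ≤ b (insert e L) - p (L.erase e) := by
  rw [sub_le_sub_iff, add_comm, add_comm (b (insert e L))]
  calc p (L.erase e) + p (insert e J)
      ≤ p (insert e (J ∪ L)) + p ((J ∩ L).erase e) := by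
        simpa only [union_comm, inter_comm] using hp.erase_add_insert_le L J e
    _ ≤ b (insert e (J ∪ L)) + b ((J ∩ L).erase e) := add_le_add (hpb _) (hpb _)
    _ ≤ b (J.erase e) + b (insert e L) := hb.le_erase_add_insert J L e

end Uncrossing

section Sandwich

variable {α G : Type*} [DecidableEq α] [AddCommGroup G] [LinearOrder G]

/-- The lower bounds that the constraints `p J ≤ ∑ j ∈ J, y j` impose on the other coordinates of
`y` once `y e = c`. It is defined on all finsets but only depends on `A.erase e`; this makes
it supermodular on the whole lattice. -/
def sliceLower (p : Finset α → G) (e : α) (c : G) (A : Finset α) : G :=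
  max (p (A.erase e)) (p (insert e A) - c)

/-- The upper bounds that the constraints `∑ j ∈ J, y j ≤ b J` impose on the other coordinates of
`y` once `y e = c`; like `sliceLower`, it only depends on `A.erase e`. -/
def sliceUpper (b : Finset α → G) (e : α) (c : G) (A : Finset α) : G :=
  min (b (A.erase e)) (b (insert e A) - c)

variable [IsOrderedAddMonoid G] {p b : Finset α → G} {e : α} {c : G}

theorem sliceUpper_eq_neg_sliceLower (b : Finset α → G) (e : α) (c : G) :
    sliceUpper b e c = -sliceLower (-b) e (-c) := by
  ext A
  simp only [sliceUpper, sliceLower, Pi.neg_apply, ← neg_sub', max_neg_neg, neg_neg]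

theorem Supermodular.sliceLower (hp : Supermodular p) (e : α) (c : G) :
    Supermodular (sliceLower p e c) := by
  intro A B
  have erase_erase :
      p (A.erase e) + p (B.erase e) ≤ p ((A ∪ B).erase e) + p ((A ∩ B).erase e) := by
    simpa only [sup_eq_union, inf_eq_inter, ← erase_union_distrib, erase_inter, inter_erase,
      erase_idem] using hp (A.erase e) (B.erase e)
  have insert_insert :
      p (insert e A) + p (insert e B) ≤ p (insert e (A ∪ B)) + p (insert e (A ∩ B)) := by
    simpa only [sup_eq_union, inf_eq_inter, ← insert_union_distrib, ← insert_inter_distrib] using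
      hp (insert e A) (insert e B)
  have erase_insert :
      p (A.erase e) + p (insert e B) ≤ p (insert e (A ∪ B)) + p ((A ∩ B).erase e) :=
    hp.erase_add_insert_le A B e
  have insert_erase :
      p (B.erase e) + p (insert e A) ≤ p (insert e (A ∪ B)) + p ((A ∩ B).erase e) := by
    simpa only [union_comm, inter_comm] using hp.erase_add_insert_le B A e
  -- Each choice of the two maxima on the left is bounded by one of these four inequalities.
  simp only [_root_.sliceLower, sup_eq_union, inf_eq_inter]
  grind

theorem Submodular.sliceUpper (hb : Submodular b) (e : α) (c : G) :
    Submodular (sliceUpper b e c) := by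
  rw [← supermodular_neg, sliceUpper_eq_neg_sliceLower, neg_neg]
  exact (supermodular_neg.2 hb).sliceLower e (-c)

theorem sliceLower_le_sliceUpper (hpb : p ≤ b)
    (hpc : ∀ J, p (insert e J) - b (J.erase e) ≤ c)
    (hcb : ∀ L, c ≤ b (insert e L) - p (L.erase e)) :
    sliceLower p e c ≤ sliceUpper b e c := by
  intro A
  exact max_le (le_min (hpb _) (le_sub_comm.1 (hcb A)))
    (le_min (sub_le_comm.1 (hpc A)) (sub_le_sub_right (hpb _) c))

theorem exists_sliceLower_le_sliceUpper [Finite α] (hp : Supermodular p) (hb : Submodular b)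
    (hp0 : p ∅ = 0) (hb0 : b ∅ = 0) (hpb : p ≤ b) (e : α) :
    ∃ c, sliceLower p e c ∅ = 0 ∧ sliceUpper b e c ∅ = 0 ∧
      sliceLower p e c ≤ sliceUpper b e c := by
  obtain ⟨J, hJ⟩ := Finite.exists_max fun J : Finset α => p (insert e J) - b (J.erase e)
  have hcb := insert_sub_erase_le_insert_sub_erase hp hb hpb e J
  refine ⟨_, ?_, ?_, sliceLower_le_sliceUpper hpb hJ hcb⟩
  · simpa [sliceLower, hp0, hb0] using hJ ∅
  · simpa [sliceUpper, hp0, hb0] using hcb ∅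

theorem le_sum_update_of_sliceLower_le {m : α → G} {J : Finset α}
    (h : sliceLower p e c (J.erase e) ≤ ∑ j ∈ J.erase e, m j) :
    p J ≤ ∑ j ∈ J, Function.update m e c j := by
  obtain ⟨h_erase, h_insert⟩ := max_le_iff.1 h
  by_cases he : e ∈ J
  · rw [insert_erase he, sub_le_iff_le_add'] at h_insert
    rwa [sum_update_of_mem he, sdiff_singleton_eq_erase]
  · rw [sum_update_of_notMem he]
    simpa only [erase_eq_of_notMem he] using h_erase

theorem sum_update_le_of_le_sliceUpper {m : α → G} {J : Finset α}
    (h : ∑ j ∈ J.erase e, m j ≤ sliceUpper b e c (J.erase e)) :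
    ∑ j ∈ J, Function.update m e c j ≤ b J := by
  obtain ⟨h_erase, h_insert⟩ := le_min_iff.1 h
  by_cases he : e ∈ J
  · rw [insert_erase he, le_sub_iff_add_le'] at h_insert
    rwa [sum_update_of_mem he, sdiff_singleton_eq_erase]
  · rw [sum_update_of_notMem he]
    simpa only [erase_eq_of_notMem he] using h_erase

theorem exists_modular_between_on [Finite α] (S : Finset α) (hp : Supermodular p)
    (hb : Submodular b) (hp0 : p ∅ = 0) (hb0 : b ∅ = 0) (hpb : p ≤ b) :
    ∃ m : α → G, ∀ J ⊆ S, p J ≤ ∑ j ∈ J, m j ∧ ∑ j ∈ J, m j ≤ b J := by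
  induction S using Finset.induction_on generalizing p b with
  | empty => exact ⟨0, by simp [hp0, hb0]⟩
  | insert e S _ ih =>
    obtain ⟨c, hp0', hb0', hpb'⟩ := exists_sliceLower_le_sliceUpper hp hb hp0 hb0 hpb e
    obtain ⟨m, hm⟩ := ih (hp.sliceLower e c) (hb.sliceUpper e c) hp0' hb0' hpb'
    refine ⟨Function.update m e c, fun J hJ => ?_⟩
    obtain ⟨h_lower, h_upper⟩ := hm (J.erase e) (subset_insert_iff.1 hJ)
    exact ⟨le_sum_update_of_sliceLower_le h_lower, sum_update_le_of_le_sliceUpper h_upper⟩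

theorem exists_modular_between [Finite α] (hp : Supermodular p) (hb : Submodular b)
    (hp0 : p ∅ = 0) (hb0 : b ∅ = 0) (hpb : p ≤ b) :
    ∃ m : α → G, ∀ J, p J ≤ ∑ j ∈ J, m j ∧ ∑ j ∈ J, m j ≤ b J := by
  have := Fintype.ofFinite α
  obtain ⟨m, hm⟩ := exists_modular_between_on univ hp hb hp0 hb0 hpb
  exact ⟨m, fun J => hm J (subset_univ J)⟩

theorem fourier_motzkin_exact_general [Finite α] {f g : Finset α → G} (hf : Submodular f)
    (hg : Supermodular g) (hf0 : f ∅ = 0) (hg0 : g ∅ = 0) (x : α → G) :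
    (∃ y : α → G, ∀ J : Finset α, J ≠ ∅ →
        (∑ j ∈ J, (x j + y j) ≤ f J ∧ g J ≤ ∑ j ∈ J, y j))
      ↔ (∀ J : Finset α, J ≠ ∅ → ∑ j ∈ J, x j ≤ f J - g J) := by
  simp only [sum_add_distrib, ← le_sub_iff_add_le']
  constructor
  · rintro ⟨y, hy⟩ J hJ
    obtain ⟨h_upper, h_lower⟩ := hy J hJ
    exact le_sub_comm.1 (h_lower.trans h_upper)
  · intro h
    have hgf : g ≤ fun J => f J - ∑ j ∈ J, x j := by
      intro J
      obtain rfl | hJ := eq_or_ne J ∅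
      · simp [hf0, hg0]
      · exact le_sub_comm.1 (h J hJ)
    obtain ⟨y, hy⟩ := exists_modular_between hg (hf.sub_sum x) hg0 (by simp [hf0]) hgf
    exact ⟨y, fun J _ => (hy J).symm⟩

end Sandwich

section CompactForm

variable {K : ℕ}

theorem compactForm_pair_one (A B : Finset (Fin K)) : compactForm ![A, B] 1 = A ∪ B := by
  ext a
  simp [compactForm, powersetCard_one, mem_sup, Fin.exists_fin_two]

theorem compactForm_pair_two (A B : Finset (Fin K)) : compactForm ![A, B] 2 = A ∩ B := by
  have h : powersetCard 2 (univ : Finset (Fin 2)) = {univ} := powersetCard_self univ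
  ext a
  simp [compactForm, h, mem_inf, Fin.forall_fin_two]

theorem sum_compactForm_pair {M : Type*} [AddCommMonoid M] (h : Finset (Fin K) → M)
    (A B : Finset (Fin K)) :
    ∑ i ∈ Icc 1 2, h (compactForm ![A, B] i) = h (A ∪ B) + h (A ∩ B) := by
  rw [sum_Icc_succ_top one_le_two, Icc_self, sum_singleton, compactForm_pair_one,
    compactForm_pair_two]

theorem submodular_of_sum_compactForm_le {M : Type*} [AddCommMonoid M] [LE M]
    {f : Finset (Fin K) → M}
    (hf : ∀ T : Fin 2 → Finset (Fin K),
      ∑ i ∈ Icc 1 2, f (compactForm T i) ≤ ∑ i : Fin 2, f (T i)) :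
    Submodular f := fun A B => by
  simpa [sum_compactForm_pair] using hf ![A, B]

theorem supermodular_of_le_sum_compactForm {M : Type*} [AddCommMonoid M] [LE M]
    {g : Finset (Fin K) → M}
    (hg : ∀ T : Fin 2 → Finset (Fin K),
      ∑ i : Fin 2, g (T i) ≤ ∑ i ∈ Icc 1 2, g (compactForm T i)) :
    Supermodular g := fun A B => by
  simpa [sum_compactForm_pair] using hg ![A, B]

end CompactForm

/-- Exactness of the Fourier–Motzkin elimination: if `f(∅) = g(∅) = 0`, `g ≥ 0`, and
for every list `T_1, …, T_t` of subsets of `𝒦` with compact form `T*_{t,1}, …, T*_{t,t}`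
one has `∑ᵢ f(T_i) ≥ ∑ᵢ f(T*_{t,i})` and `∑ᵢ g(T_i) ≤ ∑ᵢ g(T*_{t,i})`, then for every
`x ∈ ℝ^K` there exists `y ∈ ℝ^K` with `∑_{j∈J} (x_j + y_j) ≤ f(J)` and
`∑_{j∈J} y_j ≥ g(J)` for all nonempty `J ⊆ 𝒦` if and only if
`∑_{j∈J} x_j ≤ f(J) − g(J)` for all nonempty `J ⊆ 𝒦`. -/
theorem fourier_motzkin_exact {K : ℕ} (hK : 1 ≤ K) (f g : Finset (Fin K) → ℝ)
    (hf0 : f ∅ = 0) (hg0 : g ∅ = 0) (hg : ∀ J : Finset (Fin K), 0 ≤ g J)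
    (hfc : ∀ (t : ℕ) (T : Fin t → Finset (Fin K)),
      ∑ i ∈ Finset.Icc 1 t, f (compactForm T i) ≤ ∑ i : Fin t, f (T i))
    (hgc : ∀ (t : ℕ) (T : Fin t → Finset (Fin K)),
      ∑ i : Fin t, g (T i) ≤ ∑ i ∈ Finset.Icc 1 t, g (compactForm T i))
    (x : Fin K → ℝ) :
    (∃ y : Fin K → ℝ, ∀ J : Finset (Fin K), J ≠ ∅ →
        (∑ j ∈ J, (x j + y j) ≤ f J ∧ g J ≤ ∑ j ∈ J, y j))
      ↔ (∀ J : Finset (Fin K), J ≠ ∅ → ∑ j ∈ J, x j ≤ f J - g J) := by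
  exact fourier_motzkin_exact_general (submodular_of_sum_compactForm_le (hfc 2))
    (supermodular_of_le_sum_compactForm (hgc 2)) hf0 hg0 x
end
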